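/- Let A be a commutative ring of prime characteristic p, let e ≥ 1 be an integer, and let f ∈ A[x]. Then f·D_{p^e}(f^{p^e - 1}) equals the sum over ℓ from 2 to p^e of (ℓ - 1)·D_ℓ(f)·D_{p^e - ℓ}(f^{p^e - 1}), where the coefficients ℓ - 1 are interpreted via the natural map ℤ → A. -/

import Mathlib

open Polynomial
open Finset.HasAntidiagonal (antidiagonal)

/-!
The Hasse derivatives `D_ℓ f` are the coefficients of `F(T) = f(x + T)` as a polynomial in `T` over
`A[x]`. For every polynomial `F` and every `n ≥ 1`, the coefficients of `T F' F^(n-1)` and of `F^n`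
at `T^n` agree: `n` times the first is the coefficient of `T (F^n)'`, that is, `n` times the
coefficient of `F^n`. Cancelling `n` is legitimate over `ℕ[a₁, a₂, …]`, and the identity then
specializes to every commutative semiring. Hence the coefficient of `(T F' - F) F^(n-1)` at `T^n`
vanishes. In its convolution expansion the weight `ℓ - 1` is `-1` for `ℓ = 0` and `0` for `ℓ = 1`.
-/

section CoeffPow

variable {R : Type*} [CommSemiring R]

theorem coeff_X_mul_derivative (F : R[X]) (n : ℕ) :
    (X * derivative F).coeff n = n * F.coeff n := by
  cases n with
  | zero => rw [coeff_X_mul_zero, Nat.cast_zero, zero_mul]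
  | succ n => rw [coeff_X_mul, coeff_derivative, Nat.cast_succ, mul_comm]

theorem coeff_derivative_mul_pow_of_isAddTorsionFree [IsAddTorsionFree R] (F : R[X]) (n : ℕ) :
    (derivative F * F ^ n).coeff n = (F ^ (n + 1)).coeff (n + 1) := by
  apply nsmul_right_injective n.succ_ne_zero
  calc
    (n + 1) • (derivative F * F ^ n).coeff n = (derivative (F ^ (n + 1))).coeff n := by
      rw [derivative_pow_succ, mul_assoc, coeff_C_mul, mul_comm (F ^ n), nsmul_eq_mul,
        Nat.cast_succ]
    _ = (n + 1) • (F ^ (n + 1)).coeff (n + 1) := by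
      rw [coeff_derivative, nsmul_eq_mul, Nat.cast_succ, mul_comm]

theorem coeff_derivative_mul_pow (F : R[X]) (n : ℕ) :
    (derivative F * F ^ n).coeff n = (F ^ (n + 1)).coeff (n + 1) := by
  -- `MvPolynomial R ℕ` has coefficients in `ℕ` and one variable for each element of `R`.
  let φ : MvPolynomial R ℕ →+* R := MvPolynomial.counitNat R
  obtain ⟨G, rfl⟩ := map_surjective φ (MvPolynomial.counitNat_surjective R) F
  rw [derivative_map, ← Polynomial.map_pow, ← Polynomial.map_pow, ← Polynomial.map_mul, coeff_map,
    coeff_map, coeff_derivative_mul_pow_of_isAddTorsionFree]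

theorem sum_antidiagonal_mul_coeff_mul_coeff_pow (F : R[X]) (n : ℕ) :
    ∑ ij ∈ antidiagonal (n + 1), ij.1 * F.coeff ij.1 * (F ^ n).coeff ij.2 =
      (F ^ (n + 1)).coeff (n + 1) := by
  simp only [← coeff_X_mul_derivative]
  rw [← coeff_mul, mul_assoc, coeff_X_mul, coeff_derivative_mul_pow]

end CoeffPow

section HasseDeriv

theorem hasseDeriv_map {R S : Type*} [Semiring R] [Semiring S] (φ : R →+* S) (n : ℕ) (f : R[X]) :
    hasseDeriv n (f.map φ) = (hasseDeriv n f).map φ := by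
  ext k
  rw [hasseDeriv_coeff, coeff_map, coeff_map, hasseDeriv_coeff, map_mul, map_natCast]

theorem coeff_taylor_X_map_C {R : Type*} [Semiring R] (f : R[X]) (n : ℕ) :
    (taylor X (f.map C)).coeff n = hasseDeriv n f := by
  rw [taylor_coeff, hasseDeriv_map, eval_map, eval₂_C_X]

theorem sum_antidiagonal_mul_hasseDeriv_mul_hasseDeriv_pow {R : Type*} [CommSemiring R] (f : R[X])
    (n : ℕ) :
    ∑ ij ∈ antidiagonal (n + 1), ij.1 * hasseDeriv ij.1 f * hasseDeriv ij.2 (f ^ n) =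
      hasseDeriv (n + 1) (f ^ (n + 1)) := by
  simp only [← coeff_taylor_X_map_C, Polynomial.map_pow, taylor_pow]
  exact sum_antidiagonal_mul_coeff_mul_coeff_pow (taylor X (f.map C)) n

theorem sum_antidiagonal_sub_one_mul_hasseDeriv_mul_hasseDeriv_pow {R : Type*} [CommRing R]
    (f : R[X]) (n : ℕ) :
    ∑ ij ∈ antidiagonal (n + 1),
      ((ij.1 : R[X]) - 1) * hasseDeriv ij.1 f * hasseDeriv ij.2 (f ^ n) = 0 := by
  simp only [sub_mul, one_mul, Finset.sum_sub_distrib]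
  rw [sum_antidiagonal_mul_hasseDeriv_mul_hasseDeriv_pow, ← hasseDeriv_mul, ← pow_succ', sub_self]

end HasseDeriv

theorem sum_antidiagonal_eq_add_add_sum_Icc {M : Type*} [AddCommMonoid M] (g : ℕ → ℕ → M) {n : ℕ}
    (hn : 1 ≤ n) :
    ∑ ij ∈ antidiagonal n, g ij.1 ij.2 =
      g 0 n + (g 1 (n - 1) + ∑ i ∈ Finset.Icc 2 n, g i (n - i)) := by
  rw [Finset.Nat.sum_antidiagonal_eq_sum_range_succ g, Finset.range_eq_Ico,
    Finset.sum_eq_sum_Ico_succ_bot n.succ_pos,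
    Finset.sum_eq_sum_Ico_succ_bot (Nat.lt_succ_of_le hn), Nat.sub_zero]
  rfl

theorem mul_hasseDeriv_eq_sum_general {A : Type*} [CommRing A] {n : ℕ} (hn : 1 ≤ n) (f : A[X]) :
    f * hasseDeriv n (f ^ (n - 1)) =
      ∑ ℓ ∈ Finset.Icc 2 n,
        C (((ℓ : ℤ) - 1 : ℤ) : A) * hasseDeriv ℓ f * hasseDeriv (n - ℓ) (f ^ (n - 1)) := by
  have weighted_sum_eq_zero :=
    sum_antidiagonal_sub_one_mul_hasseDeriv_mul_hasseDeriv_pow f (n - 1)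
  rw [Nat.sub_add_cancel hn, sum_antidiagonal_eq_add_add_sum_Icc
    (fun i j ↦ ((i : A[X]) - 1) * hasseDeriv i f * hasseDeriv j (f ^ (n - 1))) hn]
    at weighted_sum_eq_zero
  simp only [Nat.cast_zero, Nat.cast_one, hasseDeriv_zero', zero_sub, neg_mul, one_mul, sub_self,
    zero_mul, zero_add] at weighted_sum_eq_zero
  simp only [Int.cast_sub, Int.cast_natCast, Int.cast_one, map_sub, map_natCast, map_one]
  exact neg_add_eq_zero.mp weighted_sum_eq_zero

/-- For a commutative ring `A` of prime characteristic `p`, `e ≥ 1` and `f ∈ A[x]`,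
`f·D_{p^e}(f^{p^e-1}) = ∑_{ℓ=2}^{p^e} (ℓ-1)·D_ℓ(f)·D_{p^e-ℓ}(f^{p^e-1})`. -/
theorem mul_hasseDeriv_eq_sum (A : Type*) [CommRing A] (p : ℕ) [Fact p.Prime] [CharP A p]
    (e : ℕ) (he : 1 ≤ e) (f : Polynomial A) :
    f * hasseDeriv (p ^ e) (f ^ (p ^ e - 1)) =
      ∑ ℓ ∈ Finset.Icc 2 (p ^ e),
        C ((((ℓ : ℤ) - 1) : ℤ) : A) * hasseDeriv ℓ f *
          hasseDeriv (p ^ e - ℓ) (f ^ (p ^ e - 1)) :=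
  mul_hasseDeriv_eq_sum_general (Nat.one_le_pow e p (Fact.out : p.Prime).pos) f
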